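/- Let l, m be nonnegative integers, set α = N(a + 1/2) − 3/2, β = 1 − m − N(a + 1/2), x̄ = (1/N) Σ_i x_i, t = 2r²/(N x̄²) − 1, and μ_{lm}(x) = e^{−ω r²/2} x̄^m L^{(−β)}_l(ω r²) Π_{i=1}^N |x_i − x_{i+1}|^a. Then for every spin state |s⟩ ∈ Σ, the Σ-valued function Ψ^{(0)}_{lm} = μ_{lm} · P^{(α,β)}_{⌊m/2⌋}(t) · Λ|s⟩ satisfies H_0 Ψ^{(0)}_{lm} = (Nω(2a+1) + 2ω(2l+m)) Ψ^{(0)}_{lm} at every point x ∈ C_0 with x̄ ≠ 0. -/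

import Mathlib

noncomputable section

/-- The spin space `Σ`: complex functions on `Fin N → Fin d`. -/
abbrev Spin (N d : ℕ) : Type := (Fin N → Fin d) → ℂ

/-- Partial derivative `∂_i F` of a function of `N` real variables. -/
noncomputable def pd {N : ℕ} {E : Type} [NormedAddCommGroup E] [NormedSpace ℝ E]
    (i : Fin N) (F : (Fin N → ℝ) → E) : (Fin N → ℝ) → E :=
  fun x => fderiv ℝ F x (Pi.single i 1)

/-- The spin exchange operator `S_{ij}`, transposing the `i`-th and `j`-th spin slots. -/
def Sop {N d : ℕ} (i j : Fin N) (v : Spin N d) : Spin N d :=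
  fun c => v (c ∘ Equiv.swap i j)

/-- The action of a permutation `π ∈ S_N` on the spin space, permuting the `N` spin slots. -/
def spinPerm {N d : ℕ} (π : Equiv.Perm (Fin N)) (v : Spin N d) : Spin N d :=
  fun c => v (c ∘ π)

/-- The spin vector `|s_i⟩ = (1/N!) ∑_{π ∈ S_N, π(1) = i} π |s⟩`. -/
noncomputable def sComp {N d : ℕ} [NeZero N] (s : Spin N d) (i : Fin N) : Spin N d :=
  (N.factorial : ℂ)⁻¹ •
    ∑ π ∈ Finset.univ.filter (fun π : Equiv.Perm (Fin N) => π 0 = i), spinPerm π s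

/-- The symmetrization `Λ|s⟩ = ∑ i, |s_i⟩`. -/
noncomputable def Lam {N d : ℕ} [NeZero N] (s : Spin N d) : Spin N d :=
  ∑ i : Fin N, sComp s i

/-- The configuration space `C_0 = {x : x_1 < ⋯ < x_N}`. -/
def C0 (N : ℕ) : Set (Fin N → ℝ) := {x | StrictMono x}

/-- The Hamiltonian `H_0 = -∑ i ∂_i² + V_0` with
`V_0 = ω² r² + ∑ i 2a²/((x_i - x_{i-1})(x_i - x_{i+1}))
  + ∑ i 2a (x_i - x_{i+1})⁻² (a - S_{i,i+1})` (indices cyclic). -/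
noncomputable def H0 {N d : ℕ} [NeZero N] (a ω : ℝ)
    (Ψ : (Fin N → ℝ) → Spin N d) : (Fin N → ℝ) → Spin N d :=
  fun x =>
    -(∑ i : Fin N, pd i (pd i Ψ) x)
    + (ω ^ 2 * (∑ i : Fin N, (x i) ^ 2)
        + ∑ i : Fin N, 2 * a ^ 2 / ((x i - x (i - 1)) * (x i - x (i + 1)))) • Ψ x
    + ∑ i : Fin N, (2 * a / (x i - x (i + 1)) ^ 2) • (a • Ψ x - Sop i (i + 1) (Ψ x))

/-- The center of mass `x̄ = (1/N) ∑ i x_i`. -/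
noncomputable def xbar {N : ℕ} (x : Fin N → ℝ) : ℝ := (∑ i : Fin N, x i) / N

/-- The generalized binomial coefficient `C(x, j) = x(x-1)⋯(x-j+1)/j!`. -/
noncomputable def genBinom (x : ℝ) (j : ℕ) : ℝ :=
  (descPochhammer ℝ j).eval x / j.factorial

/-- The generalized Laguerre polynomial
`L^{(λ)}_n(t) = ∑_{k=0}^n (-1)^k C(n+λ, n-k) t^k / k!`. -/
noncomputable def laguerre (lam : ℝ) (n : ℕ) (t : ℝ) : ℝ :=
  ∑ k ∈ Finset.range (n + 1),
    (-1 : ℝ) ^ k * genBinom ((n : ℝ) + lam) (n - k) * t ^ k / (k.factorial : ℝ)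

/-- The Jacobi polynomial
`P^{(α,β)}_n(t) = ∑_{k=0}^n C(n+α, n-k) C(n+β, k) ((t-1)/2)^k ((t+1)/2)^{n-k}`. -/
noncomputable def jacobi (α β : ℝ) (n : ℕ) (t : ℝ) : ℝ :=
  ∑ k ∈ Finset.range (n + 1),
    genBinom ((n : ℝ) + α) (n - k) * genBinom ((n : ℝ) + β) k *
      ((t - 1) / 2) ^ k * ((t + 1) / 2) ^ (n - k)

/-- The variable `t = 2r²/(N x̄²) - 1`. -/
noncomputable def tvar {N : ℕ} (x : Fin N → ℝ) : ℝ :=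
  2 * (∑ i : Fin N, (x i) ^ 2) / ((N : ℝ) * xbar x ^ 2) - 1

/-- The gauge factor `μ_{lm}(x) = e^{-ω r²/2} x̄^m L^{(-β)}_l(ω r²) ∏ i |x_i - x_{i+1}|^a`,
where `β = 1 - m - N(a + 1/2)`. -/
noncomputable def mulm {N : ℕ} [NeZero N] (a ω : ℝ) (l m : ℕ) (x : Fin N → ℝ) : ℝ :=
  Real.exp (-(ω / 2) * ∑ i : Fin N, (x i) ^ 2) * xbar x ^ m *
    laguerre (-(1 - (m : ℝ) - (N : ℝ) * (a + 1 / 2))) l (ω * ∑ i : Fin N, (x i) ^ 2) *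
    ∏ i : Fin N, |x i - x (i + 1)| ^ a


/-! ### One-variable polynomial identities -/

lemma genBinom_succ (x : ℝ) (j : ℕ) :
    genBinom x (j + 1) * ((j : ℝ) + 1) = genBinom x j * (x - j) := by
  unfold genBinom
  rw [descPochhammer_succ_eval, Nat.factorial_succ]
  have : (j.factorial : ℝ) ≠ 0 := by positivity
  have : (j : ℝ) + 1 ≠ 0 := by positivity
  push_cast
  field_simp

def lagC (lam : ℝ) (n k : ℕ) : ℝ :=
  (-1 : ℝ) ^ k * genBinom ((n : ℝ) + lam) (n - k) / (k.factorial : ℝ)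

def lagP (lam : ℝ) (n : ℕ) : Polynomial ℝ :=
  ∑ k ∈ Finset.range (n + 1), Polynomial.C (lagC lam n k) * Polynomial.X ^ k

lemma lagP_eval (lam : ℝ) (n : ℕ) (t : ℝ) : (lagP lam n).eval t = laguerre lam n t := by
  simp only [lagP, laguerre, lagC, Polynomial.eval_finsetSum, Polynomial.eval_mul,
    Polynomial.eval_C, Polynomial.eval_pow, Polynomial.eval_X]
  refine Finset.sum_congr rfl fun k _ => by ring

lemma lagC_rec (lam : ℝ) (n k : ℕ) (hk : k < n) :
    lagC lam n (k + 1) * ((k : ℝ) + 1) * (k + 1 + lam) = - ((n : ℝ) - k) * lagC lam n k := by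
  obtain ⟨j, rfl⟩ : ∃ j, n = k + 1 + j := ⟨n - (k + 1), by omega⟩
  have h := genBinom_succ (((k + 1 + j : ℕ) : ℝ) + lam) j
  have e1 : k + 1 + j - (k + 1) = j := by omega
  have e2 : k + 1 + j - k = j + 1 := by omega
  unfold lagC
  rw [e1, e2, Nat.factorial_succ, pow_succ]
  have : (k.factorial : ℝ) ≠ 0 := by positivity
  have : (k : ℝ) + 1 ≠ 0 := by positivity
  push_cast at h ⊢
  field_simp
  linear_combination h

lemma lag_term (lam n : ℝ) (k : ℕ) (c t : ℝ) :
    t * (Polynomial.C c * Polynomial.X ^ k).derivative.derivative.eval t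
      + (lam + 1 - t) * (Polynomial.C c * Polynomial.X ^ k).derivative.eval t
      + n * (Polynomial.C c * Polynomial.X ^ k).eval t
    = c * k * (k + lam) * t ^ (k - 1) + (n - k) * c * t ^ k := by
  rcases k with _ | _ | k
  · simp
  · simp; ring
  · simp; ring

lemma lag_ode (lam : ℝ) (n : ℕ) (t : ℝ) :
    t * (lagP lam n).derivative.derivative.eval t
      + (lam + 1 - t) * (lagP lam n).derivative.eval t + n * (lagP lam n).eval t = 0 := by
  unfold lagP
  simp only [Polynomial.derivative_sum, Polynomial.eval_finsetSum, Finset.mul_sum]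
  rw [← Finset.sum_add_distrib, ← Finset.sum_add_distrib]
  simp only [lag_term]
  rw [Finset.sum_add_distrib, Finset.sum_range_succ', Finset.sum_range_succ (fun k => _ * _ * t ^ k)]
  simp only [Nat.cast_zero, sub_self, zero_mul, mul_zero, add_zero]
  rw [← Finset.sum_add_distrib]
  refine Finset.sum_eq_zero fun k hk => ?_
  have h := lagC_rec lam n k (Finset.mem_range.1 hk)
  simp only [Nat.add_sub_cancel]
  push_cast
  linear_combination t ^ k * h

def jacC (α β : ℝ) (n k : ℕ) : ℝ :=
  genBinom ((n : ℝ) + α) (n - k) * genBinom ((n : ℝ) + β) k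

/-- Jacobi polynomial in the variable `u = (t+1)/2`. -/
def jacP (α β : ℝ) (n : ℕ) : Polynomial ℝ :=
  ∑ k ∈ Finset.range (n + 1),
    Polynomial.C (jacC α β n k) * ((Polynomial.X - Polynomial.C 1) ^ k * Polynomial.X ^ (n - k))

lemma jacP_eval (α β : ℝ) (n : ℕ) (u : ℝ) :
    (jacP α β n).eval u = jacobi α β n (2 * u - 1) := by
  simp only [jacP, jacobi, jacC, Polynomial.eval_finsetSum, Polynomial.eval_mul,
    Polynomial.eval_C, Polynomial.eval_pow, Polynomial.eval_X, Polynomial.eval_sub]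
  refine Finset.sum_congr rfl fun k _ => ?_
  rw [show (2 * u - 1 - 1) / 2 = u - 1 by ring, show (2 * u - 1 + 1) / 2 = u by ring]
  ring

lemma jacC_rec (α β : ℝ) (n k : ℕ) (hk : k < n) :
    ((k : ℝ) + 1) * (k + 1 + α) * jacC α β n (k + 1)
      = ((n : ℝ) - k) * (n - k + β) * jacC α β n k := by
  obtain ⟨j, rfl⟩ : ∃ j, n = k + 1 + j := ⟨n - (k + 1), by omega⟩
  have h := genBinom_succ (((k + 1 + j : ℕ) : ℝ) + α) j
  have h2 := genBinom_succ (((k + 1 + j : ℕ) : ℝ) + β) k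
  have e1 : k + 1 + j - (k + 1) = j := by omega
  have e2 : k + 1 + j - k = j + 1 := by omega
  unfold jacC
  rw [e1, e2]
  push_cast at h h2 ⊢
  linear_combination (genBinom (k + 1 + j + α) j * (k + 1 + α)) * h2
    - (k + 1 + j - k + β) * genBinom (k + 1 + j + β) k * h

lemma jac_term (α β : ℝ) (k j : ℕ) (c u : ℝ) :
    u * (1 - u) * (Polynomial.C c * ((Polynomial.X - Polynomial.C 1) ^ k *
        Polynomial.X ^ j)).derivative.derivative.eval u
      + (β + 1 - (α + β + 2) * u) * (Polynomial.C c * ((Polynomial.X - Polynomial.C 1) ^ k *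
        Polynomial.X ^ j)).derivative.eval u
      + ((k + j : ℝ) * (k + j + α + β + 1)) * (Polynomial.C c * ((Polynomial.X - Polynomial.C 1) ^ k *
        Polynomial.X ^ j)).eval u
    = (j * (j + β) * c * (u - 1) ^ k * u ^ (j - 1) * (u - (u - 1)))
      - (k * (k + α) * c * (u - 1) ^ (k - 1) * u ^ j * (u - (u - 1))) := by
  rcases k with _ | _ | k <;> rcases j with _ | _ | j <;>
  · simp [Polynomial.derivative_pow]
    try ring

lemma jac_ode (α β : ℝ) (n : ℕ) (u : ℝ) :
    u * (1 - u) * (jacP α β n).derivative.derivative.eval u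
      + (β + 1 - (α + β + 2) * u) * (jacP α β n).derivative.eval u
      + (n * (n + α + β + 1)) * (jacP α β n).eval u = 0 := by
  unfold jacP
  simp only [Polynomial.derivative_sum, Polynomial.eval_finsetSum, Finset.mul_sum]
  rw [← Finset.sum_add_distrib, ← Finset.sum_add_distrib]
  trans ∑ k ∈ Finset.range (n + 1),
      (((n - k : ℕ) * ((n - k : ℕ) + β) * jacC α β n k * (u - 1) ^ k * u ^ (n - k - 1))
      - (k * (k + α) * jacC α β n k * (u - 1) ^ (k - 1) * u ^ (n - k)))
  · refine Finset.sum_congr rfl fun k hk => ?_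
    have h := jac_term α β k (n - k) (jacC α β n k) u
    have hc : ((k : ℝ) + ((n - k : ℕ) : ℝ)) = n := by
      have := Finset.mem_range.1 hk
      rw [Nat.cast_sub (by omega)]; ring
    rw [hc, sub_sub_cancel, mul_one, mul_one] at h
    exact h
  rw [Finset.sum_sub_distrib, Finset.sum_range_succ, Finset.sum_range_succ' (fun k => (k : ℝ) * _ * _ * _ * _)]
  simp only [Nat.cast_zero, Nat.sub_self, zero_mul, add_zero]
  rw [← Finset.sum_sub_distrib]
  refine Finset.sum_eq_zero fun k hk => ?_
  have hk' := Finset.mem_range.1 hk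
  have h := jacC_rec α β n k hk'
  have e : n - k - 1 = n - (k + 1) := by omega
  rw [e, Nat.add_sub_cancel, Nat.cast_sub hk'.le]
  push_cast
  linear_combination -((u - 1) ^ k * u ^ (n - (k + 1))) * h

/-! ### Spin part -/

lemma Lam_eq {N d : ℕ} [NeZero N] (s : Spin N d) :
    Lam s = (N.factorial : ℂ)⁻¹ • ∑ π : Equiv.Perm (Fin N), spinPerm π s := by
  unfold Lam sComp
  rw [← Finset.smul_sum]
  congr 1
  exact Finset.sum_fiberwise Finset.univ (fun π : Equiv.Perm (Fin N) => π 0) (fun π => spinPerm π s)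

lemma Sop_Lam {N d : ℕ} [NeZero N] (s : Spin N d) (i j : Fin N) :
    Sop i j (Lam s) = Lam s := by
  rw [Lam_eq]
  funext c
  simp only [Sop, Pi.smul_apply, Finset.sum_apply, spinPerm]
  congr 1
  exact Fintype.sum_equiv (Equiv.mulLeft (Equiv.swap i j)) _ _ (fun π => rfl)

lemma Sop_smul {N d : ℕ} (i j : Fin N) (r : ℝ) (v : Spin N d) :
    Sop i j (r • v) = r • Sop i j v := rfl

/-! ### Derivative calculus -/

def HP {N : ℕ} (i : Fin N) (F : (Fin N → ℝ) → ℝ) (f' : ℝ) (z : Fin N → ℝ) : Prop :=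
  DifferentiableAt ℝ F z ∧ fderiv ℝ F z (Pi.single i 1) = f'

lemma HP.mul {N : ℕ} {i : Fin N} {F G : (Fin N → ℝ) → ℝ} {f g : ℝ} {z : Fin N → ℝ}
    (hF : HP i F f z) (hG : HP i G g z) :
    HP i (fun z => F z * G z) (f * G z + F z * g) z := by
  refine ⟨hF.1.mul hG.1, ?_⟩
  rw [(hF.1.hasFDerivAt.fun_mul hG.1.hasFDerivAt).fderiv]
  simp [hF.2, hG.2]; ring

lemma HP.add {N : ℕ} {i : Fin N} {F G : (Fin N → ℝ) → ℝ} {f g : ℝ} {z : Fin N → ℝ}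
    (hF : HP i F f z) (hG : HP i G g z) :
    HP i (fun z => F z + G z) (f + g) z := by
  refine ⟨hF.1.add hG.1, ?_⟩
  rw [(hF.1.hasFDerivAt.fun_add hG.1.hasFDerivAt).fderiv]
  simp [hF.2, hG.2]

lemma HP.sum {N : ℕ} {i : Fin N} {ι : Type} (s : Finset ι) {F : ι → (Fin N → ℝ) → ℝ}
    {f : ι → ℝ} {z : Fin N → ℝ} (hF : ∀ j, HP i (F j) (f j) z) :
    HP i (fun z => ∑ j ∈ s, F j z) (∑ j ∈ s, f j) z := by
  refine ⟨DifferentiableAt.fun_sum fun j _ => (hF j).1, ?_⟩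
  rw [(HasFDerivAt.fun_sum fun j _ => (hF j).1.hasFDerivAt).fderiv]
  simp [(hF _).2]

lemma HP.const {N : ℕ} (i : Fin N) (c : ℝ) (z : Fin N → ℝ) : HP i (fun _ => c) 0 z := by
  refine ⟨differentiableAt_const _, by simp⟩

lemma HP.coord {N : ℕ} (i j : Fin N) (z : Fin N → ℝ) :
    HP i (fun z => z j) (if j = i then 1 else 0) z := by
  refine ⟨differentiableAt_apply j z, ?_⟩
  rw [(hasFDerivAt_apply j z).fderiv]
  simp [Pi.single_apply]

lemma HP.comp {N : ℕ} {i : Fin N} {F : (Fin N → ℝ) → ℝ} {f : ℝ} {z : Fin N → ℝ}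
    (hF : HP i F f z) {φ : ℝ → ℝ} {φ' : ℝ} (hφ : HasDerivAt φ φ' (F z)) :
    HP i (fun z => φ (F z)) (φ' * f) z := by
  have := hφ.comp_hasFDerivAt z hF.1.hasFDerivAt
  refine ⟨this.differentiableAt, ?_⟩
  have h2 : fderiv ℝ (fun z => φ (F z)) z = _ := this.fderiv
  rw [h2]
  simp [hF.2]

def D2 {N : ℕ} (U : Set (Fin N → ℝ)) (F : (Fin N → ℝ) → ℝ)
    (F1 F2 : Fin N → (Fin N → ℝ) → ℝ) : Prop :=
  ∀ z ∈ U, ∀ i, HP i F (F1 i z) z ∧ HP i (F1 i) (F2 i z) z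

lemma D2.mul {N : ℕ} {U : Set (Fin N → ℝ)} {F G : (Fin N → ℝ) → ℝ}
    {F1 F2 G1 G2 : Fin N → (Fin N → ℝ) → ℝ} (hF : D2 U F F1 F2) (hG : D2 U G G1 G2) :
    D2 U (fun z => F z * G z) (fun i z => F1 i z * G z + F z * G1 i z)
      (fun i z => F2 i z * G z + 2 * (F1 i z * G1 i z) + F z * G2 i z) := by
  intro z hz i
  refine ⟨(hF z hz i).1.mul (hG z hz i).1, ?_⟩
  convert ((hF z hz i).2.mul (hG z hz i).1).add ((hF z hz i).1.mul (hG z hz i).2) using 1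
  ring

lemma D2.sum {N : ℕ} {ι : Type} (s : Finset ι) {U : Set (Fin N → ℝ)}
    {F : ι → (Fin N → ℝ) → ℝ} {F1 F2 : ι → Fin N → (Fin N → ℝ) → ℝ}
    (hF : ∀ j, D2 U (F j) (F1 j) (F2 j)) :
    D2 U (fun z => ∑ j ∈ s, F j z) (fun i z => ∑ j ∈ s, F1 j i z)
      (fun i z => ∑ j ∈ s, F2 j i z) := by
  intro z hz i
  exact ⟨HP.sum s fun j => (hF j z hz i).1, HP.sum s fun j => (hF j z hz i).2⟩

lemma D2.comp {N : ℕ} {U : Set (Fin N → ℝ)} {F : (Fin N → ℝ) → ℝ}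
    {F1 F2 : Fin N → (Fin N → ℝ) → ℝ} (hF : D2 U F F1 F2) {φ φ1 φ2 : ℝ → ℝ}
    (h1 : ∀ z ∈ U, HasDerivAt φ (φ1 (F z)) (F z))
    (h2 : ∀ z ∈ U, HasDerivAt φ1 (φ2 (F z)) (F z)) :
    D2 U (fun z => φ (F z)) (fun i z => φ1 (F z) * F1 i z)
      (fun i z => φ2 (F z) * F1 i z ^ 2 + φ1 (F z) * F2 i z) := by
  intro z hz i
  refine ⟨(hF z hz i).1.comp (h1 z hz), ?_⟩
  convert ((hF z hz i).1.comp (h2 z hz)).mul (hF z hz i).2 using 1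
  ring

lemma D2.rsq {N : ℕ} (U : Set (Fin N → ℝ)) :
    D2 U (fun z => ∑ j, z j ^ 2) (fun i z => 2 * z i) (fun _ _ => 2) := by
  intro z _ i
  constructor
  · have := HP.sum (i := i) (z := z) Finset.univ (fun j =>
      (HP.coord i j z).comp (φ := fun t => t ^ 2) (by simpa using hasDerivAt_pow 2 (z j)))
    convert this using 1
    simp
  · have := (HP.const i 2 z).mul (HP.coord i i z)
    convert this using 1
    simp

lemma D2.xbar {N : ℕ} (U : Set (Fin N → ℝ)) :
    D2 U xbar (fun _ _ => (N : ℝ)⁻¹) (fun _ _ => 0) := by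
  intro z _ i
  refine ⟨?_, HP.const _ _ _⟩
  have := (HP.sum (i := i) (z := z) Finset.univ (fun j => HP.coord i j z)).mul
    (HP.const i (N : ℝ)⁻¹ z)
  simp only [zero_mul, mul_zero, add_zero, Finset.sum_ite_eq', Finset.mem_univ, if_true, one_mul] at this
  exact this

lemma D2.pd_smul {N d : ℕ} {U : Set (Fin N → ℝ)} (hU : IsOpen U)
    {F f : (Fin N → ℝ) → ℝ} {F1 F2 : Fin N → (Fin N → ℝ) → ℝ} (hF : D2 U F F1 F2)
    (hf : ∀ z ∈ U, f z = F z) (v : Spin N d) (x : Fin N → ℝ) (hx : x ∈ U) (i : Fin N) :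
    pd i (pd i (fun z => f z • v)) x = F2 i x • v := by
  have key : ∀ z ∈ U, pd i (fun z => f z • v) z = F1 i z • v := by
    intro z hz
    have e : (fun z => f z • v) =ᶠ[nhds z] (fun z => F z • v) := by
      filter_upwards [hU.mem_nhds hz] with w hw
      rw [hf w hw]
    unfold pd
    rw [e.fderiv_eq, ((hF z hz i).1.1.hasFDerivAt.smul_const v).fderiv]
    simp [(hF z hz i).1.2]
  have e : pd i (fun z => f z • v) =ᶠ[nhds x] (fun z => F1 i z • v) := by
    filter_upwards [hU.mem_nhds hx] with w hw
    exact key w hw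
  unfold pd at e ⊢
  rw [e.fderiv_eq, ((hF x hx i).2.1.hasFDerivAt.smul_const v).fderiv]
  simp [(hF x hx i).2.2]

/-! ### The particular functions -/

def UU (N : ℕ) [NeZero N] : Set (Fin N → ℝ) :=
  {z | (∀ i, z i - z (i + 1) ≠ 0) ∧ xbar z ≠ 0}

lemma UU_open (N : ℕ) [NeZero N] : IsOpen (UU N) := by
  have h1 : IsOpen {z : Fin N → ℝ | ∀ i, z i - z (i + 1) ≠ 0} := by
    rw [Set.ofPred_forall]
    refine isOpen_iInter_of_finite fun i => ?_
    exact isOpen_ne_fun (by fun_prop) (by fun_prop)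
  have h2 : IsOpen {z : Fin N → ℝ | xbar z ≠ 0} := by
    refine isOpen_ne_fun ?_ (by fun_prop)
    unfold xbar
    fun_prop
  exact h1.inter h2

def eps {N : ℕ} [NeZero N] (j i : Fin N) : ℝ :=
  (if j = i then 1 else 0) - (if j + 1 = i then 1 else 0)

lemma D2.diff {N : ℕ} [NeZero N] (U : Set (Fin N → ℝ)) (j : Fin N) :
    D2 U (fun z => z j - z (j + 1)) (fun i _ => eps j i) (fun _ _ => 0) := by
  intro z _ i
  refine ⟨?_, HP.const _ _ _⟩
  have := (HP.coord i j z).add ((HP.const i (-1) z).mul (HP.coord i (j + 1) z))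
  convert this using 1
  · funext z; ring
  · simp only [eps]; ring

lemma one_ne {N : ℕ} [NeZero N] (hN : 3 ≤ N) (i : Fin N) : i + 1 ≠ i := by
  intro h
  have h1 : (1 : Fin N) = 0 := by simpa using h
  have := congrArg Fin.val h1
  rw [Fin.val_one', Fin.val_zero, Nat.mod_eq_of_lt (by omega)] at this
  omega

lemma sum_eps {N : ℕ} [NeZero N] (c : Fin N → ℝ) (i : Fin N) :
    ∑ j, c j * eps j i = c i - c (i - 1) := by
  simp only [eps, mul_sub, Finset.sum_sub_distrib, mul_ite, mul_one, mul_zero]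
  simp only [← eq_sub_iff_add_eq, Finset.sum_ite_eq', Finset.mem_univ, if_true]

lemma sum_eps_sq {N : ℕ} [NeZero N] (hN : 3 ≤ N) (c : Fin N → ℝ) (i : Fin N) :
    ∑ j, c j * eps j i ^ 2 = c i + c (i - 1) := by
  have : ∀ j, eps j i ^ 2 = (if j = i then 1 else 0) + (if j + 1 = i then 1 else 0) := by
    intro j
    unfold eps
    by_cases h1 : j = i
    · subst h1
      simp [one_ne hN]
    · by_cases h2 : j + 1 = i <;> simp [h1, h2]
  simp only [this, mul_add, Finset.sum_add_distrib, mul_ite, mul_one, mul_zero]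
  simp only [← eq_sub_iff_add_eq, Finset.sum_ite_eq', Finset.mem_univ, if_true]

lemma sum_shift {N : ℕ} [NeZero N] (c : Fin N → ℝ) : ∑ i, c (i - 1) = ∑ i, c i :=
  Fintype.sum_equiv (Equiv.subRight 1) _ _ (fun _ => rfl)

def dinv {N : ℕ} [NeZero N] (z : Fin N → ℝ) (i : Fin N) : ℝ := (z i - z (i + 1))⁻¹

def hh {N : ℕ} [NeZero N] (z : Fin N → ℝ) (i : Fin N) : ℝ := dinv z i - dinv z (i - 1)

def kk {N : ℕ} [NeZero N] (z : Fin N → ℝ) (i : Fin N) : ℝ :=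
  - (dinv z i ^ 2) - dinv z (i - 1) ^ 2

def WW {N : ℕ} [NeZero N] (a : ℝ) (z : Fin N → ℝ) : ℝ :=
  Real.exp (a * ∑ j, Real.log (z j - z (j + 1)))

lemma WW_eq {N : ℕ} [NeZero N] (a : ℝ) (z : Fin N → ℝ) (hz : z ∈ UU N) :
    ∏ i : Fin N, |z i - z (i + 1)| ^ a = WW a z := by
  unfold WW
  rw [Finset.mul_sum, Real.exp_sum]
  refine Finset.prod_congr rfl fun i _ => ?_
  rw [Real.rpow_def_of_pos (abs_pos.2 (hz.1 i)), Real.log_abs, mul_comm]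

lemma D2_WW {N : ℕ} [NeZero N] (hN : 3 ≤ N) (a : ℝ) :
    D2 (UU N) (WW a) (fun i z => a * WW a z * hh z i)
      (fun i z => WW a z * (a ^ 2 * hh z i ^ 2 + a * kk z i)) := by
  have h1 := D2.sum (U := UU N) Finset.univ (fun j : Fin N =>
    (D2.diff (UU N) j).comp (φ := Real.log) (φ1 := fun t => t⁻¹) (φ2 := fun t => -(t ^ 2)⁻¹)
      (fun z hz => Real.hasDerivAt_log (hz.1 j)) (fun z hz => hasDerivAt_inv (hz.1 j)))
  have h2 := h1.comp (φ := fun t => Real.exp (a * t)) (φ1 := fun t => a * Real.exp (a * t))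
    (φ2 := fun t => a * (a * Real.exp (a * t)))
    (fun z _ => by
      have := ((hasDerivAt_id (∑ j, Real.log (z j - z (j + 1)))).const_mul a).exp
      simpa [mul_comm] using this)
    (fun z _ => by
      have := (((hasDerivAt_id (∑ j, Real.log (z j - z (j + 1)))).const_mul a).exp).const_mul a
      simpa [mul_comm] using this)
  have h3 : D2 (UU N) (WW a) _ _ := h2
  convert h3 using 1
  · funext i z
    change a * WW a z * hh z i = _
    rw [sum_eps (fun j => (z j - z (j + 1))⁻¹)]
    rfl
  · funext i z
    simp only [mul_zero, add_zero]
    rw [sum_eps (fun j => (z j - z (j + 1))⁻¹), sum_eps_sq hN (fun j => -((z j - z (j + 1)) ^ 2)⁻¹)]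
    simp only [WW, hh, kk, dinv, inv_pow]
    ring

lemma sum_hh {N : ℕ} [NeZero N] (z : Fin N → ℝ) : ∑ i, hh z i = 0 := by
  simp only [hh, Finset.sum_sub_distrib, sum_shift (dinv z), sub_self]

lemma sum_xhh {N : ℕ} [NeZero N] (z : Fin N → ℝ) (hz : z ∈ UU N) :
    ∑ i, z i * hh z i = N := by
  have h : ∑ i, z i * dinv z (i - 1) = ∑ i, z (i + 1) * dinv z i := by
    rw [← sum_shift (fun i => z (i + 1) * dinv z i)]
    simp
  simp only [hh, mul_sub, Finset.sum_sub_distrib]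
  rw [h, ← Finset.sum_sub_distrib]
  have : ∀ i : Fin N, z i * dinv z i - z (i + 1) * dinv z i = 1 := by
    intro i
    rw [← sub_mul]
    exact mul_inv_cancel₀ (hz.1 i)
  simp [this]

lemma sum_pot {N : ℕ} [NeZero N] (a : ℝ) (z : Fin N → ℝ) :
    ∑ i, (a ^ 2 * hh z i ^ 2 + a * kk z i) =
      ∑ i : Fin N, 2 * a ^ 2 / ((z i - z (i - 1)) * (z i - z (i + 1)))
      + ∑ i : Fin N, (2 * a / (z i - z (i + 1)) ^ 2) * (a - 1) := by
  have e1 : ∀ i : Fin N, 2 * a ^ 2 / ((z i - z (i - 1)) * (z i - z (i + 1)))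
      = - 2 * a ^ 2 * (dinv z i * dinv z (i - 1)) := by
    intro i
    have : dinv z (i - 1) = - (z i - z (i - 1))⁻¹ := by
      unfold dinv
      rw [sub_add_cancel, ← neg_sub, inv_neg]
    rw [this, dinv, div_eq_mul_inv, mul_inv]
    ring
  have e2 : ∀ i : Fin N, (2 * a / (z i - z (i + 1)) ^ 2) * (a - 1)
      = 2 * a * (a - 1) * dinv z i ^ 2 := by
    intro i
    rw [dinv, div_eq_mul_inv, inv_pow]
    ring
  have e3 : ∀ i : Fin N, a ^ 2 * hh z i ^ 2 + a * kk z i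
      = - 2 * a ^ 2 * (dinv z i * dinv z (i - 1)) + a * (a - 1) * dinv z i ^ 2
        + a * (a - 1) * dinv z (i - 1) ^ 2 := by
    intro i; unfold hh kk; ring
  simp only [e1, e2, e3, Finset.sum_add_distrib]
  rw [sum_shift (fun i => a * (a - 1) * dinv z i ^ 2), add_assoc, ← Finset.sum_add_distrib]
  congr 1
  exact Finset.sum_congr rfl fun i _ => by ring

def A0 (ω : ℝ) (L : Polynomial ℝ) (t : ℝ) : ℝ := Real.exp (-(ω / 2) * t) * L.eval (ω * t)

lemma A0_deriv (ω : ℝ) (L : Polynomial ℝ) (t : ℝ) :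
    HasDerivAt (A0 ω L) (A0 ω (Polynomial.C (-(ω / 2)) * L + Polynomial.C ω * L.derivative) t) t := by
  unfold A0
  have h1 := ((hasDerivAt_id t).const_mul (-(ω / 2))).exp
  have h2 := (L.hasDerivAt (ω * t)).comp t ((hasDerivAt_id t).const_mul ω)
  have := h1.mul h2
  refine this.congr_deriv ?_
  simp
  ring

lemma kappa (m : ℕ) : ((m / 2 : ℕ) : ℝ) * ((m / 2 : ℕ) + 1 / 2 - m) = - (m * (m - 1) / 4) := by
  rcases Nat.even_or_odd' m with ⟨n, rfl | rfl⟩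
  · rw [show 2 * n / 2 = n by omega]; push_cast; ring
  · rw [show (2 * n + 1) / 2 = n by omega]; push_cast; ring

/-- Sum of the second derivatives of a product of radial functions with the ground state. -/
lemma sum_second {N : ℕ} [NeZero N] (x : Fin N → ℝ) (hx : x ∈ UU N)
    (a w R y A A1 A2 B B1 B2 P P1 P2 f0 f1 f2 M : ℝ)
    (hR : ∑ i, x i ^ 2 = R) (hy : ∑ i, x i = N * y) :
    ∑ i, ((((A2 * (2 * x i) ^ 2 + A1 * 2) * B + 2 * (A1 * (2 * x i) * (B1 * M))
        + A * (B2 * M ^ 2 + B1 * 0)) * P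
        + 2 * ((A1 * (2 * x i) * B + A * (B1 * M)) * (P1 * (2 * x i * f0 + R * (f1 * M))))
        + A * B * (P2 * (2 * x i * f0 + R * (f1 * M)) ^ 2
          + P1 * (2 * f0 + 2 * (2 * x i * (f1 * M)) + R * (f2 * M ^ 2 + f1 * 0)))) * w
        + 2 * (((A1 * (2 * x i) * B + A * (B1 * M)) * P
          + A * B * (P1 * (2 * x i * f0 + R * (f1 * M)))) * (a * w * hh x i))
        + A * B * P * (w * (a ^ 2 * hh x i ^ 2 + a * kk x i)))
    = w * (N * (2 * A1 * B * P + B2 * A * P * M ^ 2 + A * B * (P2 * R ^ 2 * f1 ^ 2 * M ^ 2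
            + P1 * (2 * f0 + R * f2 * M ^ 2)) + 2 * A * B1 * P1 * R * f1 * M ^ 2)
        + (A * B * (P2 * 4 * f0 * R * f1 * M + P1 * 4 * f1 * M) + 4 * A1 * B1 * P * M
            + 4 * A1 * B * P1 * R * f1 * M + 4 * A * B1 * P1 * f0 * M) * (N * y)
        + (4 * A2 * B * P + 4 * A * B * P2 * f0 ^ 2 + 8 * A1 * B * P1 * f0) * R
        + 2 * a * (2 * A1 * B * P + 2 * A * B * P1 * f0) * N
        + A * B * P * ∑ i, (a ^ 2 * hh x i ^ 2 + a * kk x i)) := by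
  trans ∑ i, (
      w * (2 * A1 * B * P + B2 * A * P * M ^ 2 + A * B * (P2 * R ^ 2 * f1 ^ 2 * M ^ 2
            + P1 * (2 * f0 + R * f2 * M ^ 2)) + 2 * A * B1 * P1 * R * f1 * M ^ 2)
        + w * (A * B * (P2 * 4 * f0 * R * f1 * M + P1 * 4 * f1 * M) + 4 * A1 * B1 * P * M
            + 4 * A1 * B * P1 * R * f1 * M + 4 * A * B1 * P1 * f0 * M) * x i
        + w * (4 * A2 * B * P + 4 * A * B * P2 * f0 ^ 2 + 8 * A1 * B * P1 * f0) * x i ^ 2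
        + w * (2 * a * (A * B1 * P * M + A * B * P1 * R * f1 * M)) * hh x i
        + w * (2 * a * (2 * A1 * B * P + 2 * A * B * P1 * f0)) * (x i * hh x i)
        + w * (A * B * P) * (a ^ 2 * hh x i ^ 2 + a * kk x i))
  · exact Finset.sum_congr rfl fun i _ => by ring
  generalize hq : (fun i => a ^ 2 * hh x i ^ 2 + a * kk x i) = q
  have hq' : ∀ i, a ^ 2 * hh x i ^ 2 + a * kk x i = q i := fun i => congrFun hq i
  simp only [hq']
  simp only [Finset.sum_add_distrib, ← Finset.mul_sum, sum_hh, sum_xhh x hx, hR, hy,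
    Finset.sum_const, Finset.card_univ, Fintype.card_fin, nsmul_eq_mul]
  ring

lemma final_alg (N y R a ω B P P1 P2 L L1 L2 e l m : ℝ) (hN : N ≠ 0) (hy : y ≠ 0)
    (o1 : ω * R * L2 + (m + N * (a + 1 / 2) - ω * R) * L1 + l * L = 0)
    (o2 : R / (N * y ^ 2) * (1 - R / (N * y ^ 2)) * P2
      + (2 - m - N * (a + 1 / 2) - (3 / 2 - m) * (R / (N * y ^ 2))) * P1
      + - (m * (m - 1) / 4) * P = 0)
    (A A1 A2 B1 B2 f0 f1 f2 M : ℝ) (hA : A = e * L) (hA1 : A1 = e * (-(ω / 2) * L + ω * L1))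
    (hA2 : A2 = e * (ω ^ 2 / 4 * L - ω ^ 2 * L1 + ω ^ 2 * L2))
    (hB1 : B1 = m * B / y) (hB2 : B2 = m * (m - 1) * B / y ^ 2)
    (hf0 : f0 = 1 / (N * y ^ 2)) (hf1 : f1 = -2 / (N * y ^ 3)) (hf2 : f2 = 6 / (N * y ^ 4))
    (hM : M = 1 / N) :
    -((N * (2 * A1 * B * P + B2 * A * P * M ^ 2 + A * B * (P2 * R ^ 2 * f1 ^ 2 * M ^ 2
            + P1 * (2 * f0 + R * f2 * M ^ 2)) + 2 * A * B1 * P1 * R * f1 * M ^ 2)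
        + (A * B * (P2 * 4 * f0 * R * f1 * M + P1 * 4 * f1 * M) + 4 * A1 * B1 * P * M
            + 4 * A1 * B * P1 * R * f1 * M + 4 * A * B1 * P1 * f0 * M) * (N * y)
        + (4 * A2 * B * P + 4 * A * B * P2 * f0 ^ 2 + 8 * A1 * B * P1 * f0) * R
        + 2 * a * (2 * A1 * B * P + 2 * A * B * P1 * f0) * N)) + ω ^ 2 * R * (A * B * P)
      = (N * ω * (2 * a + 1) + 2 * ω * (2 * l + m)) * (A * B * P) := by
  have key := congrArg₂ (fun s t => -4 * ω * e * B * P * s + 4 * e * L * B / (N * y ^ 2) * t) o1 o2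
  simp only [mul_zero, add_zero] at key
  rw [← sub_eq_zero, ← key]
  subst hA hA1 hA2 hB1 hB2 hf0 hf1 hf2 hM
  field_simp
  ring

theorem stmt_18 (N d : ℕ) [NeZero N] (hN : 3 ≤ N) (hd : 1 ≤ d)
    (a ω : ℝ) (ha : 1 / 2 < a) (hω : 0 < ω)
    (s : Spin N d) (l m : ℕ) :
    ∀ x ∈ C0 N, xbar x ≠ 0 →
      H0 a ω (fun y =>
          (mulm a ω l m y *
            jacobi ((N : ℝ) * (a + 1 / 2) - 3 / 2) (1 - (m : ℝ) - (N : ℝ) * (a + 1 / 2))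
              (m / 2) (tvar y)) • Lam s) x =
        ((N : ℝ) * ω * (2 * a + 1) + 2 * ω * (2 * l + m)) •
          ((mulm a ω l m x *
            jacobi ((N : ℝ) * (a + 1 / 2) - 3 / 2) (1 - (m : ℝ) - (N : ℝ) * (a + 1 / 2))
              (m / 2) (tvar x)) • Lam s) := by
  intro x hx hxb
  have hN0 : (N : ℝ) ≠ 0 := Nat.cast_ne_zero.2 (NeZero.ne N)
  have hxU : x ∈ UU N := by
    refine ⟨fun i => ?_, hxb⟩
    rw [sub_ne_zero]
    intro h
    exact one_ne hN i ((StrictMono.injective hx) h).symm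
  set lam : ℝ := -(1 - (m : ℝ) - (N : ℝ) * (a + 1 / 2)) with hlam
  set α : ℝ := (N : ℝ) * (a + 1 / 2) - 3 / 2 with hα
  set β : ℝ := 1 - (m : ℝ) - (N : ℝ) * (a + 1 / 2) with hβ
  set L := lagP lam l with hL
  set J := jacP α β (m / 2) with hJ
  set L' := Polynomial.C (-(ω / 2)) * L + Polynomial.C ω * L.derivative with hL'
  have dA := (D2.rsq (UU N)).comp (φ := A0 ω L) (φ1 := A0 ω L')
    (φ2 := A0 ω (Polynomial.C (-(ω / 2)) * L' + Polynomial.C ω * L'.derivative))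
    (fun z _ => A0_deriv ω L _) (fun z _ => A0_deriv ω L' _)
  have dB := (D2.xbar (UU N)).comp (φ := fun t => t ^ m) (φ1 := fun t => m * t ^ (m - 1))
    (φ2 := fun t => m * ((m - 1 : ℕ) * t ^ (m - 1 - 1)))
    (fun z _ => hasDerivAt_pow m _) (fun z _ => (hasDerivAt_pow (m - 1) _).const_mul _)
  have dU := (D2.rsq (UU N)).mul ((D2.xbar (UU N)).comp (φ := fun t => 1 / (N * t ^ 2))
    (φ1 := fun t => -2 / (N * t ^ 3)) (φ2 := fun t => 6 / (N * t ^ 4))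
    (fun z hz => by
      have h0 := hz.2
      have := (hasDerivAt_const (xbar z) (1 : ℝ)).div ((hasDerivAt_pow 2 (xbar z)).const_mul (N : ℝ))
        (by positivity)
      refine this.congr_deriv ?_
      field_simp
      ring)
    (fun z hz => by
      have h0 := hz.2
      have := (hasDerivAt_const (xbar z) (-2 : ℝ)).div ((hasDerivAt_pow 3 (xbar z)).const_mul (N : ℝ))
        (by positivity)
      refine this.congr_deriv ?_
      field_simp
      ring))
  have dP := dU.comp (φ := fun t => J.eval t) (φ1 := fun t => J.derivative.eval t)
    (φ2 := fun t => J.derivative.derivative.eval t)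
    (fun z _ => J.hasDerivAt _) (fun z _ => J.derivative.hasDerivAt _)
  have dG := ((dA.mul dB).mul dP).mul (D2_WW hN a)
  have heq : ∀ z ∈ UU N, mulm a ω l m z * jacobi α β (m / 2) (tvar z) =
      A0 ω L (∑ j, z j ^ 2) * xbar z ^ m * J.eval ((∑ j, z j ^ 2) * (1 / (N * xbar z ^ 2)))
        * WW a z := by
    intro z hz
    unfold mulm A0
    rw [WW_eq a z hz, ← hlam, hL, hJ, jacP_eval, lagP_eval]
    have : tvar z = 2 * ((∑ j, z j ^ 2) * (1 / (N * xbar z ^ 2))) - 1 := by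
      unfold tvar; ring
    rw [this]
    ring
  have hpd := fun i => dG.pd_smul (UU_open N) heq (Lam s) x hxU i
  unfold H0
  simp only [hpd, Sop_smul, Sop_Lam]
  rw [heq x hxU, ← Finset.sum_smul]
  rw [sum_second x hxU a (WW a x) (∑ j, x j ^ 2) (xbar x) _ _ _ _ _ _ _ _ _ _ _ _ _ rfl
    (by unfold xbar; field_simp)]
  rw [sum_pot]
  generalize ∑ i : Fin N, 2 * a ^ 2 / ((x i - x (i - 1)) * (x i - x (i + 1))) = S1
  have hS2 : ∀ G : ℝ, ∑ i : Fin N, (2 * a / (x i - x (i + 1)) ^ 2) •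
      (a • G • Lam s - G • Lam s) =
      ((∑ i : Fin N, (2 * a / (x i - x (i + 1)) ^ 2) * (a - 1)) * G) • Lam s := by
    intro G
    rw [Finset.sum_mul, Finset.sum_smul]
    refine Finset.sum_congr rfl fun i _ => ?_
    module
  rw [hS2]
  generalize ∑ i : Fin N, (2 * a / (x i - x (i + 1)) ^ 2) * (a - 1) = S2
  have fin := final_alg N (xbar x) (∑ j, x j ^ 2) a ω (xbar x ^ m)
    (J.eval ((∑ j, x j ^ 2) * (1 / (N * xbar x ^ 2))))
    (J.derivative.eval ((∑ j, x j ^ 2) * (1 / (N * xbar x ^ 2))))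
    (J.derivative.derivative.eval ((∑ j, x j ^ 2) * (1 / (N * xbar x ^ 2))))
    (L.eval (ω * ∑ j, x j ^ 2)) (L.derivative.eval (ω * ∑ j, x j ^ 2))
    (L.derivative.derivative.eval (ω * ∑ j, x j ^ 2))
    (Real.exp (-(ω / 2) * ∑ j, x j ^ 2)) l m hN0 hxb
    (by
      have := lag_ode lam l (ω * ∑ j, x j ^ 2)
      rw [← hL] at this
      rw [← this, hlam]
      ring)
    (by
      have := jac_ode α β (m / 2) ((∑ j, x j ^ 2) * (1 / (N * xbar x ^ 2)))
      rw [← hJ] at this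
      rw [← this, ← kappa m, hα, hβ]
      ring)
    (A0 ω L (∑ j, x j ^ 2)) (A0 ω L' (∑ j, x j ^ 2))
    (A0 ω (Polynomial.C (-(ω / 2)) * L' + Polynomial.C ω * L'.derivative) (∑ j, x j ^ 2))
    (m * xbar x ^ (m - 1)) (m * ((m - 1 : ℕ) * xbar x ^ (m - 1 - 1)))
    _ _ _ _ rfl (by simp [A0, hL']) (by simp [A0, hL']; ring)
    (by
      rcases m with _ | m
      · simp
      · simp only [Nat.add_sub_cancel, pow_succ]; field_simp)
    (by
      rcases m with _ | _ | m
      · simp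
      · simp
      · simp only [Nat.add_sub_cancel, pow_succ]; push_cast; field_simp; ring)
    rfl rfl rfl rfl
  rw [← one_div]
  simp only [← neg_smul, ← add_smul, smul_smul]
  congr 1
  linear_combination WW a x * fin
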